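/- arXiv:1512.04680 — 3 statements merged into one kernel-verified Lean document; each statement's English description precedes it below -/
import Mathlib

section
/- Suppose each A_k has full row rank with λ_min(A_k A_k^T) ≥ γ_k² for constants γ_k > 0, and let γ_min := min_k γ_k. Then for every r ≥ 0 the cyclic exact BCD iterates satisfy f(x^{(r+1)}) − f* ≤ R_0 · (1/γ_min) · log(2NK) · (L + L_max) · √(Σ_{k=1}^K ‖A_k(x_k^{(r+1)} − x_k^{(r)})‖²). -/
open Finset

/-- Squared Euclidean norm of a vector in `ℝ^n`. -/
noncomputable def sqnorm {n : ℕ} (v : Fin n → ℝ) : ℝ := ∑ i, v i ^ 2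

/-- Euclidean inner product on `ℝ^n`. -/
noncomputable def dotp {n : ℕ} (u v : Fin n → ℝ) : ℝ := ∑ i, u i * v i

/-- `λ_max(AᵀA)` for a real matrix `A`, characterized as the maximum of `‖Av‖²`
over unit vectors `v`. -/
noncomputable def lamMaxQ {M N : ℕ} (A : Matrix (Fin M) (Fin N) ℝ) : ℝ :=
  sSup {r : ℝ | ∃ v : Fin N → ℝ, sqnorm v = 1 ∧ r = sqnorm (A.mulVec v)}

/-- `λ_min(AᵀA)` for a real matrix `A`, characterized as the minimum of `‖Av‖²`
over unit vectors `v`. -/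
noncomputable def lamMinQ {M N : ℕ} (A : Matrix (Fin M) (Fin N) ℝ) : ℝ :=
  sInf {r : ℝ | ∃ v : Fin N → ℝ, sqnorm v = 1 ∧ r = sqnorm (A.mulVec v)}

/-- `λ_max(AᵀA)` for the concatenated matrix `A = [A_1 ⋯ A_K]`, acting on block
vectors. -/
noncomputable def lamMaxBlock {K M N : ℕ} (A : Fin K → Matrix (Fin M) (Fin N) ℝ) : ℝ :=
  sSup {r : ℝ | ∃ v : Fin K → Fin N → ℝ, (∑ k, sqnorm (v k)) = 1 ∧
    r = sqnorm (∑ k, (A k).mulVec (v k))}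

/-- Maximum of a finite family of reals indexed by `Fin K`, `K ≥ 1`. -/
noncomputable def maxOf {K : ℕ} (hK : 1 ≤ K) (P : Fin K → ℝ) : ℝ :=
  Finset.univ.sup' (Finset.univ_nonempty_iff.mpr ⟨⟨0, hK⟩⟩) P

/-- Minimum of a finite family of reals indexed by `Fin K`, `K ≥ 1`. -/
noncomputable def minOf {K : ℕ} (hK : 1 ≤ K) (P : Fin K → ℝ) : ℝ :=
  Finset.univ.inf' (Finset.univ_nonempty_iff.mpr ⟨⟨0, hK⟩⟩) P

/-- The residual `Σ_k A_k x_k − b`. -/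
noncomputable def resid {K M N : ℕ} (A : Fin K → Matrix (Fin M) (Fin N) ℝ)
    (b : Fin M → ℝ) (x : Fin K → Fin N → ℝ) : Fin M → ℝ :=
  (∑ k, (A k).mulVec (x k)) - b

/-- The smooth part `g(x) = (1/2)‖Σ_k A_k x_k − b‖²`. -/
noncomputable def gq {K M N : ℕ} (A : Fin K → Matrix (Fin M) (Fin N) ℝ)
    (b : Fin M → ℝ) (x : Fin K → Fin N → ℝ) : ℝ :=
  (1 / 2) * sqnorm (resid A b x)

/-- The objective `f(x) = g(x) + Σ_k h_k(x_k)`. -/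
noncomputable def fq {K M N : ℕ} (A : Fin K → Matrix (Fin M) (Fin N) ℝ)
    (b : Fin M → ℝ) (h : Fin K → (Fin N → ℝ) → ℝ) (x : Fin K → Fin N → ℝ) : ℝ :=
  gq A b x + ∑ k, h k (x k)

/-- The partial gradient `∇_k g(x) = A_kᵀ (Σ_j A_j x_j − b)`. -/
noncomputable def gradk {K M N : ℕ} (A : Fin K → Matrix (Fin M) (Fin N) ℝ)
    (b : Fin M → ℝ) (x : Fin K → Fin N → ℝ) (k : Fin K) : Fin N → ℝ :=
  ((A k).transpose).mulVec (resid A b x)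

/-- The intermediate point `w_k^{(r+1)}` of the cycle: blocks `j < k` come from
`x^{(r+1)} = xp`, the remaining blocks from `x^{(r)} = x`. -/
def wpt {K N : ℕ} (x xp : Fin K → Fin N → ℝ) (k : Fin K) : Fin K → Fin N → ℝ :=
  fun j => if j < k then xp j else x j

/-- The objective of the `k`-th BCPG prox subproblem at the point
`w_k^{(r+1)} = wpt x xp k`, evaluated at candidate block `y`. -/
noncomputable def bcpgObj {K M N : ℕ} (A : Fin K → Matrix (Fin M) (Fin N) ℝ)
    (b : Fin M → ℝ) (h : Fin K → (Fin N → ℝ) → ℝ) (P : Fin K → ℝ)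
    (x xp : Fin K → Fin N → ℝ) (k : Fin K) (y : Fin N → ℝ) : ℝ :=
  dotp (gradk A b (wpt x xp k) k) (y - x k) + (P k / 2) * sqnorm (y - x k) + h k y

/-- One cycle of cyclic BCPG: `xp = x^{(r+1)}` is obtained from `x = x^{(r)}`
by letting, for `k = 1,…,K`, the `k`-th block minimize the prox subproblem at
`w_k^{(r+1)}` over `X_k`. -/
def BCPGStep {K M N : ℕ} (A : Fin K → Matrix (Fin M) (Fin N) ℝ)
    (b : Fin M → ℝ) (h : Fin K → (Fin N → ℝ) → ℝ)
    (X : Fin K → Set (Fin N → ℝ)) (P : Fin K → ℝ)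
    (x xp : Fin K → Fin N → ℝ) : Prop :=
  ∀ k : Fin K, xp k ∈ X k ∧ ∀ y ∈ X k,
    bcpgObj A b h P x xp k (xp k) ≤ bcpgObj A b h P x xp k y

/-- One cycle of cyclic exact BCD: `xp = x^{(r+1)}` is obtained from
`x = x^{(r)}` by letting, for `k = 1,…,K`, the `k`-th block minimize
`f(x_1^{(r+1)},…,x_{k−1}^{(r+1)}, ·, x_{k+1}^{(r)},…,x_K^{(r)})` over `X_k`. -/
def BCDStep {K M N : ℕ} (A : Fin K → Matrix (Fin M) (Fin N) ℝ)
    (b : Fin M → ℝ) (h : Fin K → (Fin N → ℝ) → ℝ)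
    (X : Fin K → Set (Fin N → ℝ))
    (x xp : Fin K → Fin N → ℝ) : Prop :=
  ∀ k : Fin K, xp k ∈ X k ∧ ∀ y ∈ X k,
    fq A b h (Function.update (wpt x xp k) k (xp k)) ≤
      fq A b h (Function.update (wpt x xp k) k y)

lemma sqnorm_dot {n : ℕ} (v : Fin n → ℝ) : sqnorm v = v ⬝ᵥ v := by
  simp [sqnorm, dotProduct, sq]

lemma sqnorm_nn {n : ℕ} (v : Fin n → ℝ) : 0 ≤ sqnorm v :=
  Finset.sum_nonneg fun i _ => sq_nonneg _

lemma sqnorm_smul' {n : ℕ} (c : ℝ) (v : Fin n → ℝ) : sqnorm (c • v) = c ^ 2 * sqnorm v := by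
  simp [sqnorm, mul_pow, Finset.mul_sum]

lemma sqnorm_add' {n : ℕ} (u v : Fin n → ℝ) :
    sqnorm (u + v) = sqnorm u + 2 * (u ⬝ᵥ v) + sqnorm v := by
  simp only [sqnorm_dot, add_dotProduct, dotProduct_add, dotProduct_comm v u]; ring

lemma block_bdd {K M N : ℕ} (A : Fin K → Matrix (Fin M) (Fin N) ℝ)
    (v : Fin K → Fin N → ℝ) :
    sqnorm (∑ k, (A k).mulVec (v k)) ≤
      (∑ i, ∑ p : Fin K × Fin N, (A p.1 i p.2) ^ 2) * ∑ k, sqnorm (v k) := by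
  have e : ∑ k, sqnorm (v k) = ∑ p : Fin K × Fin N, (v p.1 p.2) ^ 2 := by
    rw [Fintype.sum_prod_type]; rfl
  rw [e, sqnorm, Finset.sum_mul]
  refine Finset.sum_le_sum fun i _ => ?_
  have : (∑ k, (A k).mulVec (v k)) i = ∑ p : Fin K × Fin N, A p.1 i p.2 * v p.1 p.2 := by
    rw [Fintype.sum_prod_type, Finset.sum_apply]; rfl
  rw [this]
  exact Finset.sum_mul_sq_le_sq_mul_sq _ _ _

lemma block_le {K M N : ℕ} (A : Fin K → Matrix (Fin M) (Fin N) ℝ)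
    (v : Fin K → Fin N → ℝ) :
    sqnorm (∑ k, (A k).mulVec (v k)) ≤ lamMaxBlock A * ∑ k, sqnorm (v k) := by
  have h0 : 0 ≤ ∑ k, sqnorm (v k) := Finset.sum_nonneg fun k _ => sqnorm_nn _
  rcases h0.eq_or_lt with h | h
  · have := block_bdd A v
    rw [← h] at this ⊢
    simpa using this
  · set s := ∑ k, sqnorm (v k) with hs
    have hb : BddAbove {r : ℝ | ∃ v : Fin K → Fin N → ℝ, (∑ k, sqnorm (v k)) = 1 ∧
        r = sqnorm (∑ k, (A k).mulVec (v k))} := by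
      refine ⟨∑ i, ∑ p : Fin K × Fin N, (A p.1 i p.2) ^ 2, ?_⟩
      rintro r ⟨w, hw, rfl⟩
      have := block_bdd A w
      rwa [hw, mul_one] at this
    have hsq : ((Real.sqrt s)⁻¹) ^ 2 = s⁻¹ := by
      rw [inv_pow, Real.sq_sqrt h.le]
    have := le_csSup hb ⟨fun k => (Real.sqrt s)⁻¹ • v k, by
      simp only [sqnorm_smul', hsq, ← Finset.mul_sum]
      rw [← hs]; exact inv_mul_cancel₀ h.ne', rfl⟩
    simp only [Matrix.mulVec_smul, ← Finset.smul_sum, sqnorm_smul', hsq] at this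
    change _ ≤ lamMaxBlock A at this
    rw [inv_mul_le_iff₀ h] at this
    linarith

lemma lamMaxBlock_nn {K M N : ℕ} (A : Fin K → Matrix (Fin M) (Fin N) ℝ) :
    0 ≤ lamMaxBlock A := by
  apply Real.sSup_nonneg
  rintro r ⟨w, hw, rfl⟩
  exact sqnorm_nn _

lemma lamMaxQ_nn {M N : ℕ} (A : Matrix (Fin M) (Fin N) ℝ) :
    0 ≤ lamMaxQ A := by
  apply Real.sSup_nonneg
  rintro r ⟨w, hw, rfl⟩
  exact sqnorm_nn _

lemma lamMinQ_le {M N : ℕ} (A : Matrix (Fin M) (Fin N) ℝ) (v : Fin N → ℝ) (hv : sqnorm v = 1) :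
    lamMinQ A ≤ sqnorm (A.mulVec v) := by
  refine csInf_le ⟨0, ?_⟩ ⟨v, hv, rfl⟩
  rintro r ⟨w, hw, rfl⟩
  exact sqnorm_nn _

lemma dot_sq_le {n : ℕ} (u v : Fin n → ℝ) : (u ⬝ᵥ v) ^ 2 ≤ sqnorm u * sqnorm v :=
  Finset.sum_mul_sq_le_sq_mul_sq _ _ _

lemma L_ge {K M N : ℕ} (hK : 1 ≤ K) (hM : 1 ≤ M) (A : Fin K → Matrix (Fin M) (Fin N) ℝ)
    (g : ℝ) (hg : 0 < g) (hr : ∀ k, g ^ 2 ≤ lamMinQ ((A k).transpose)) :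
    K * g ^ 2 ≤ lamMaxBlock A := by
  let u : Fin M → ℝ := Pi.single ⟨0, hM⟩ 1
  have hu : sqnorm u = 1 := by simp [sqnorm_dot, u]
  let v : Fin K → Fin N → ℝ := fun k => (A k).transpose.mulVec u
  set s := ∑ k, sqnorm (v k) with hs
  have h1 : K * g ^ 2 ≤ s := by
    have : ∑ k : Fin K, g ^ 2 ≤ s :=
      Finset.sum_le_sum fun k _ => (hr k).trans (lamMinQ_le _ _ hu)
    simpa using this
  have h2 : u ⬝ᵥ (∑ k, (A k).mulVec (v k)) = s := by
    rw [dotProduct_sum]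
    refine Finset.sum_congr rfl fun k _ => ?_
    rw [Matrix.dotProduct_mulVec, ← Matrix.mulVec_transpose, sqnorm_dot]
  have h3 := dot_sq_le u (∑ k, (A k).mulVec (v k))
  rw [h2, hu, one_mul] at h3
  have h4 := block_le A v
  have hK' : (1:ℝ) ≤ K := by exact_mod_cast hK
  have hsp : 0 < s := lt_of_lt_of_le (by positivity) h1
  have : s ≤ lamMaxBlock A := by
    by_contra hc
    push Not at hc
    nlinarith
  linarith

lemma resid_diff {K M N : ℕ} (A : Fin K → Matrix (Fin M) (Fin N) ℝ)
    (b : Fin M → ℝ) (x y : Fin K → Fin N → ℝ) :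
    resid A b x = resid A b y + ∑ k, (A k).mulVec (x k - y k) := by
  simp only [resid, Matrix.mulVec_sub, Finset.sum_sub_distrib]; abel

lemma resid_update {K M N : ℕ} (A : Fin K → Matrix (Fin M) (Fin N) ℝ)
    (b : Fin M → ℝ) (w : Fin K → Fin N → ℝ) (k : Fin K) (y z : Fin N → ℝ) :
    resid A b (Function.update w k y) =
      resid A b (Function.update w k z) + (A k).mulVec (y - z) := by
  rw [resid_diff A b _ (Function.update w k z)]
  congr 1
  rw [Finset.sum_eq_single k]
  · simp
  · intro j _ hj; simp [hj]
  · simp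

lemma fq_update {K M N : ℕ} (A : Fin K → Matrix (Fin M) (Fin N) ℝ)
    (b : Fin M → ℝ) (h : Fin K → (Fin N → ℝ) → ℝ)
    (w : Fin K → Fin N → ℝ) (k : Fin K) (y z : Fin N → ℝ) :
    fq A b h (Function.update w k y) = fq A b h (Function.update w k z)
      + (resid A b (Function.update w k z)) ⬝ᵥ ((A k).mulVec (y - z))
      + 1 / 2 * sqnorm ((A k).mulVec (y - z)) + h k y - h k z := by
  have hh : ∀ y, ∑ j, h j (Function.update w k y j) =
      h k y + ∑ j ∈ Finset.univ.erase k, h j (w j) := by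
    intro y
    rw [← Finset.add_sum_erase _ _ (Finset.mem_univ k)]
    congr 1
    · simp
    · refine Finset.sum_congr rfl fun j hj => ?_
      rw [Function.update_of_ne (Finset.ne_of_mem_erase hj)]
  simp only [fq, gq, hh]
  rw [resid_update A b w k y z, sqnorm_add']; ring

lemma opt_cond {K M N : ℕ} (A : Fin K → Matrix (Fin M) (Fin N) ℝ)
    (b : Fin M → ℝ) (h : Fin K → (Fin N → ℝ) → ℝ) (X : Fin K → Set (Fin N → ℝ))
    (hXcv : ∀ k, Convex ℝ (X k)) (hhcv : ∀ k, ConvexOn ℝ Set.univ (h k))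
    (x xp : Fin K → Fin N → ℝ) (hs : BCDStep A b h X x xp) (k : Fin K)
    (y : Fin N → ℝ) (hy : y ∈ X k) :
    0 ≤ (resid A b (Function.update (wpt x xp k) k (xp k))) ⬝ᵥ ((A k).mulVec (y - xp k))
      + h k y - h k (xp k) := by
  obtain ⟨hm, ho⟩ := hs k
  set c := (resid A b (Function.update (wpt x xp k) k (xp k))) ⬝ᵥ ((A k).mulVec (y - xp k))
  set q := sqnorm ((A k).mulVec (y - xp k))
  have hq : 0 ≤ q := sqnorm_nn _
  have key : ∀ t : ℝ, 0 < t → t ≤ 1 → 0 ≤ c + h k y - h k (xp k) + t * (q / 2) := by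
    intro t ht ht1
    have hz : (1 - t) • xp k + t • y ∈ X k := hXcv k hm hy (by linarith) ht.le (by ring)
    have h1 := ho _ hz
    rw [fq_update A b h _ k ((1 - t) • xp k + t • y) (xp k)] at h1
    have e : (1 - t) • xp k + t • y - xp k = t • (y - xp k) := by
      ext i; simp; ring
    rw [e, Matrix.mulVec_smul, dotProduct_smul, sqnorm_smul', smul_eq_mul] at h1
    have h2 := (hhcv k).2 (Set.mem_univ (xp k)) (Set.mem_univ y)
      (by linarith : 0 ≤ 1 - t) ht.le (by ring)
    simp only [smul_eq_mul] at h2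
    have h3 : 0 ≤ t * (c + h k y - h k (xp k) + t * (q / 2)) := by
      change _ ≤ _ + t * c + 1 / 2 * (t ^ 2 * q) + _ - _ at h1
      nlinarith
    exact nonneg_of_mul_nonneg_right h3 ht
  by_contra hc
  push Not at hc
  set e := c + h k y - h k (xp k)
  have hp : 0 < q - e := by linarith
  have := key (-e / (q - e)) (div_pos (by linarith) hp) (by rw [div_le_one hp]; linarith)
  have h5 : -e / (q - e) * (q / 2) ≤ -e / 2 := by
    rw [div_mul_eq_mul_div, div_le_iff₀ hp]; nlinarith
  linarith

lemma wpt_next {K N : ℕ} (x xp : Fin K → Fin N → ℝ) (k j : Fin K) :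
    Function.update (wpt x xp k) k (xp k) j = if j ≤ k then xp j else x j := by
  by_cases hj : j = k
  · subst hj; simp
  · rw [Function.update_of_ne hj]
    simp only [wpt]
    have : j < k ↔ j ≤ k := ⟨le_of_lt, fun h => lt_of_le_of_ne h hj⟩
    simp [this]

lemma step_mono {K M N : ℕ} (A : Fin K → Matrix (Fin M) (Fin N) ℝ)
    (b : Fin M → ℝ) (h : Fin K → (Fin N → ℝ) → ℝ) (X : Fin K → Set (Fin N → ℝ))
    (x xp : Fin K → Fin N → ℝ) (hx : ∀ k, x k ∈ X k) (hs : BCDStep A b h X x xp) :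
    fq A b h xp ≤ fq A b h x := by
  have key : ∀ m : ℕ, m ≤ K →
      fq A b h (fun j => if j.val < m then xp j else x j) ≤ fq A b h x := by
    intro m
    induction m with
    | zero => intro _; simp
    | succ m ih =>
      intro hm
      refine le_trans ?_ (ih (by omega))
      have := (hs ⟨m, hm⟩).2 (x ⟨m, hm⟩) (hx _)
      refine le_trans (le_of_eq ?_) (le_trans this (le_of_eq ?_))
      · congr 1; funext j
        rw [wpt_next]
        simp [Fin.le_def, Nat.lt_succ_iff]
      · congr 1; funext j
        by_cases hj : j = ⟨m, hm⟩
        · subst hj; simp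
        · rw [Function.update_of_ne hj]; simp [wpt, Fin.lt_def]
  have := key K le_rfl
  simpa using this

lemma sum_filter_le {K M N : ℕ} (A : Fin K → Matrix (Fin M) (Fin N) ℝ)
    (z : Fin K → Fin N → ℝ) (j : Fin K) :
    sqnorm (∑ k, if k < j then (A k).mulVec (z k) else 0) ≤
      lamMaxBlock A * ∑ k, sqnorm (z k) := by
  have h1 := block_le A (fun k => if k < j then z k else 0)
  have e : ∀ k, (A k).mulVec (if k < j then z k else 0) =
      if k < j then (A k).mulVec (z k) else 0 := by
    intro k; split_ifs <;> simp
  simp only [e] at h1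
  refine h1.trans (mul_le_mul_of_nonneg_left ?_ (lamMaxBlock_nn A))
  refine Finset.sum_le_sum fun k _ => ?_
  split_ifs
  · exact le_rfl
  · simpa [sqnorm] using sqnorm_nn (z k)

lemma cost_le {K M N : ℕ} (A : Fin K → Matrix (Fin M) (Fin N) ℝ)
    (b : Fin M → ℝ) (h : Fin K → (Fin N → ℝ) → ℝ) (X : Fin K → Set (Fin N → ℝ))
    (hXcv : ∀ k, Convex ℝ (X k)) (hhcv : ∀ k, ConvexOn ℝ Set.univ (h k))
    (x xp : Fin K → Fin N → ℝ) (hs : BCDStep A b h X x xp)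
    (y : Fin K → Fin N → ℝ) (hy : ∀ k, y k ∈ X k) :
    fq A b h xp - fq A b h y ≤
      ∑ j, ((A j).mulVec (xp j - x j)) ⬝ᵥ
        (∑ k, if k < j then (A k).mulVec (xp k - y k) else 0) := by
  have h1 : fq A b h xp - fq A b h y ≤
      ∑ k, (resid A b xp ⬝ᵥ (A k).mulVec (xp k - y k) + h k (xp k) - h k (y k)) := by
    have e := resid_diff A b y xp
    have e2 : ∑ k, (A k).mulVec (y k - xp k) = - ∑ k, (A k).mulVec (xp k - y k) := by
      rw [← Finset.sum_neg_distrib]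
      refine Finset.sum_congr rfl fun k _ => ?_
      rw [← Matrix.mulVec_neg, neg_sub]
    have e3 : gq A b y = gq A b xp - resid A b xp ⬝ᵥ (∑ k, (A k).mulVec (xp k - y k))
        + 1 / 2 * sqnorm (∑ k, (A k).mulVec (y k - xp k)) := by
      simp only [gq]
      rw [e, sqnorm_add']
      rw [show resid A b xp ⬝ᵥ (∑ k, (A k).mulVec (y k - xp k)) =
        - (resid A b xp ⬝ᵥ ∑ k, (A k).mulVec (xp k - y k)) by rw [e2, dotProduct_neg]]
      ring
    have := sqnorm_nn (∑ k, (A k).mulVec (y k - xp k))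
    simp only [fq, Finset.sum_sub_distrib, Finset.sum_add_distrib, ← dotProduct_sum]
    linarith
  refine h1.trans ?_
  have h2 : ∀ k, resid A b xp ⬝ᵥ (A k).mulVec (xp k - y k) + h k (xp k) - h k (y k) ≤
      ∑ j, if k < j then ((A j).mulVec (xp j - x j)) ⬝ᵥ ((A k).mulVec (xp k - y k)) else 0 := by
    intro k
    have o := opt_cond A b h X hXcv hhcv x xp hs k (y k) (hy k)
    have e := resid_diff A b xp (Function.update (wpt x xp k) k (xp k))
    have e2 : ∑ j, (A j).mulVec (xp j - Function.update (wpt x xp k) k (xp k) j) =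
        ∑ j, if k < j then (A j).mulVec (xp j - x j) else 0 := by
      refine Finset.sum_congr rfl fun j _ => ?_
      rw [wpt_next]
      by_cases hj : j ≤ k
      · simp [hj, not_lt.mpr hj]
      · simp [hj, not_le.mp hj]
    rw [e2] at e
    have e4 : (A k).mulVec (y k - xp k) = - (A k).mulVec (xp k - y k) := by
      rw [← Matrix.mulVec_neg, neg_sub]
    rw [e4, dotProduct_neg] at o
    rw [e, add_dotProduct, sum_dotProduct]
    have e5 : ∀ j, (if k < j then (A j).mulVec (xp j - x j) else 0) ⬝ᵥ
        (A k).mulVec (xp k - y k) = if k < j then ((A j).mulVec (xp j - x j)) ⬝ᵥ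
          ((A k).mulVec (xp k - y k)) else 0 := by
      intro j; split_ifs <;> simp
    simp only [e5]
    linarith
  refine (Finset.sum_le_sum fun k _ => h2 k).trans (le_of_eq ?_)
  rw [Finset.sum_comm]
  refine Finset.sum_congr rfl fun j _ => ?_
  rw [dotProduct_sum]
  refine Finset.sum_congr rfl fun k _ => ?_
  split_ifs <;> simp

lemma tri_bound {K M : ℕ} (d p : Fin K → Fin M → ℝ) (B : ℝ) (hp : ∀ j, sqnorm (p j) ≤ B) :
    (∑ j, d j ⬝ᵥ p j) ^ 2 ≤ (∑ j, sqnorm (d j)) * (K * B) := by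
  have h1 : (∑ j, d j ⬝ᵥ p j) ^ 2 ≤ (∑ j, sqnorm (d j)) * ∑ j, sqnorm (p j) := by
    have e : ∀ v : Fin K → Fin M → ℝ, ∑ k, sqnorm (v k) =
        ∑ p : Fin K × Fin M, (v p.1 p.2) ^ 2 := by
      intro v; rw [Fintype.sum_prod_type]; rfl
    have e2 : ∑ j, d j ⬝ᵥ p j = ∑ q : Fin K × Fin M, d q.1 q.2 * p q.1 q.2 := by
      rw [Fintype.sum_prod_type]; rfl
    rw [e, e, e2]
    exact Finset.sum_mul_sq_le_sq_mul_sq _ _ _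
  refine h1.trans (mul_le_mul_of_nonneg_left ?_ (Finset.sum_nonneg fun k _ => sqnorm_nn _))
  have := Finset.sum_le_sum fun j (_ : j ∈ Finset.univ) => hp j
  simpa using this

/-- Lemma 4, case 2: cost-to-go estimate of cyclic exact BCD
when each `A_k` has full row rank with `λ_min(A_k A_kᵀ) ≥ γ_k²`. -/
theorem bcd_cost_to_go_row_rank {K M N : ℕ} (hK : 1 ≤ K) (hM : 1 ≤ M) (hN : 1 ≤ N)
    (hNK : 3 ≤ N * K)
    (A : Fin K → Matrix (Fin M) (Fin N) ℝ) (b : Fin M → ℝ)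
    (γ : Fin K → ℝ) (hγ : ∀ k, 0 < γ k)
    (hrank : ∀ k, γ k ^ 2 ≤ lamMinQ ((A k).transpose))
    (X : Fin K → Set (Fin N → ℝ)) (h : Fin K → (Fin N → ℝ) → ℝ)
    (hXne : ∀ k, (X k).Nonempty) (hXcl : ∀ k, IsClosed (X k))
    (hXcv : ∀ k, Convex ℝ (X k))
    (hhcv : ∀ k, ConvexOn ℝ Set.univ (h k))
    (hhlsc : ∀ k, LowerSemicontinuous (h k))
    (x : ℕ → Fin K → Fin N → ℝ) (hx0 : ∀ k, x 0 k ∈ X k)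
    (hstep : ∀ r : ℕ, BCDStep A b h X (x r) (x (r + 1)))
    (xstar : Fin K → Fin N → ℝ) (hxstarX : ∀ k, xstar k ∈ X k)
    (hxstar : ∀ y : Fin K → Fin N → ℝ, (∀ k, y k ∈ X k) → fq A b h xstar ≤ fq A b h y)
    (R0 : ℝ)
    (hR0 : ∀ z : Fin K → Fin N → ℝ, (∀ k, z k ∈ X k) → fq A b h z ≤ fq A b h (x 0) →
      ∀ y : Fin K → Fin N → ℝ, (∀ k, y k ∈ X k) →
        (∀ z' : Fin K → Fin N → ℝ, (∀ k, z' k ∈ X k) → fq A b h y ≤ fq A b h z') →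
        Real.sqrt (∑ k, sqnorm (z k - y k)) ≤ R0)
    (r : ℕ) :
    fq A b h (x (r + 1)) - fq A b h xstar ≤
      R0 * (1 / minOf hK γ) * Real.log (2 * (N : ℝ) * (K : ℝ)) *
        (lamMaxBlock A + maxOf hK (fun k => lamMaxQ (A k))) *
        Real.sqrt (∑ k, sqnorm ((A k).mulVec (x (r + 1) k - x r k))) := by
  have hXr : ∀ r k, x r k ∈ X k := by
    intro r
    cases r with
    | zero => exact hx0
    | succ r => exact fun k => (hstep r k).1
  have hmono : ∀ r, fq A b h (x r) ≤ fq A b h (x 0) := by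
    intro r
    induction r with
    | zero => exact le_rfl
    | succ r ih => exact (step_mono A b h X _ _ (hXr r) (hstep r)).trans ih
  have hR := hR0 (x (r + 1)) (hXr _) (hmono _) xstar hxstarX hxstar
  have hc := cost_le A b h X hXcv hhcv _ _ (hstep r) xstar hxstarX
  have ht := tri_bound (fun j => (A j).mulVec (x (r + 1) j - x r j))
    (fun j => ∑ k, if k < j then (A k).mulVec (x (r + 1) k - xstar k) else 0) _
    (fun j => sum_filter_le A (fun k => x (r + 1) k - xstar k) j)
  set Z := ∑ k, sqnorm (x (r + 1) k - xstar k)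
  set D := ∑ k, sqnorm ((A k).mulVec (x (r + 1) k - x r k))
  set T := ∑ j, ((A j).mulVec (x (r + 1) j - x r j)) ⬝ᵥ
        (∑ k, if k < j then (A k).mulVec (x (r + 1) k - xstar k) else 0)
  have hZ : 0 ≤ Z := Finset.sum_nonneg fun k _ => sqnorm_nn _
  have hD : 0 ≤ D := Finset.sum_nonneg fun k _ => sqnorm_nn _
  set g := minOf hK γ with hgdef
  have hg : 0 < g := by
    rw [hgdef, minOf, Finset.lt_inf'_iff]
    exact fun k _ => hγ k
  have hgle : ∀ k, g ≤ γ k := fun k => Finset.inf'_le _ (Finset.mem_univ k)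
  have hL := L_ge hK hM A g hg (fun k => (pow_le_pow_left₀ hg.le (hgle k) 2).trans (hrank k))
  have hL0 := lamMaxBlock_nn A
  have hLm : 0 ≤ maxOf hK (fun k => lamMaxQ (A k)) :=
    (lamMaxQ_nn (A ⟨0, hK⟩)).trans
      (Finset.le_sup' (fun k => lamMaxQ (A k)) (Finset.mem_univ (⟨0, hK⟩ : Fin K)))
  set L := lamMaxBlock A
  set Lm := maxOf hK (fun k => lamMaxQ (A k))
  have hlog : 1 ≤ Real.log (2 * (N : ℝ) * (K : ℝ)) := by
    have h3 : (3 : ℝ) ≤ N * K := by exact_mod_cast hNK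
    rw [Real.le_log_iff_exp_le (by linarith)]
    have := Real.exp_one_lt_d9
    linarith
  have hTle : T ≤ Real.sqrt Z * (1 / g) * L * Real.sqrt D := by
    refine le_trans (le_abs_self T) (abs_le_of_sq_le_sq ?_ (by positivity))
    have hKL : K * L ≤ L ^ 2 / g ^ 2 := by
      rw [le_div_iff₀ (by positivity)]
      nlinarith
    calc T ^ 2 ≤ D * (K * (L * Z)) := ht
      _ = D * Z * (K * L) := by ring
      _ ≤ D * Z * (L ^ 2 / g ^ 2) := by gcongr
      _ = (Real.sqrt Z) ^ 2 * (1 / g ^ 2) * L ^ 2 * (Real.sqrt D) ^ 2 := by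
        rw [Real.sq_sqrt hZ, Real.sq_sqrt hD]; ring
      _ = _ := by ring
  have hR00 : 0 ≤ R0 := (Real.sqrt_nonneg _).trans hR
  calc _ ≤ T := hc
    _ ≤ Real.sqrt Z * (1 / g) * L * Real.sqrt D := hTle
    _ ≤ R0 * (1 / g) * L * Real.sqrt D := by gcongr
    _ = R0 * (1 / g) * 1 * L * Real.sqrt D := by ring
    _ ≤ _ := by
      gcongr
      linarith
end

section
/- Let K ≥ 3 and let x^{(0)} := (1, 1/8, 3/4, 1, 1, …, 1) ∈ ℝ^K. Let x^{(1)} be the point obtained from x^{(0)} by one full cycle of exact cyclic coordinate minimization of g (coordinates updated in the order 1, 2, …, K, each coordinate set to the unique minimizer of g with all other coordinates fixed at their most recent values). Then g(x^{(1)}) ≥ (9(K−3)/(4(K−1))) · ‖x^{(0)}‖². In particular, since min g = 0 (attained at x* = 0), the optimality gap after one cycle of cyclic BCD satisfies Δ^{(1)} ≥ (9(K−3)/(4(K−1))) · ‖x^{(0)} − x*‖². -/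
open Finset

/-- The `K × K` tridiagonal Toeplitz matrix with `A_{ij} = 1` iff `|i − j| ≤ 1`. -/
def triA (K : ℕ) : Matrix (Fin K) (Fin K) ℝ :=
  Matrix.of fun i j => if (i : ℕ) ≤ (j : ℕ) + 1 ∧ (j : ℕ) ≤ (i : ℕ) + 1 then 1 else 0

/-- The objective `g(x) = ‖Ax‖²` for the tridiagonal example. -/
noncomputable def gT {K : ℕ} (x : Fin K → ℝ) : ℝ := sqnorm ((triA K).mulVec x)

/-- The initial point `x^{(0)} = (1, 1/8, 3/4, 1, 1, …, 1)`. -/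
noncomputable def xinit (K : ℕ) : Fin K → ℝ := fun k =>
  if (k : ℕ) = 1 then 1 / 8 else if (k : ℕ) = 2 then 3 / 4 else 1

/-- Intermediate point during the cycle updating coordinate `k`: coordinates
`j < k` take their new values from `x1`, coordinate `k` is the free variable `t`,
and coordinates `j > k` keep their old values from `x0`. -/
def midpt {K : ℕ} (x0 x1 : Fin K → ℝ) (k : Fin K) (t : ℝ) : Fin K → ℝ :=
  fun j => if j < k then x1 j else if j = k then t else x0 j

/-- `x1` is obtained from `x0` by one full cycle of exact cyclic coordinate
minimization of `g` (coordinates in the order `1, 2, …, K`, each coordinate set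
to the minimizer of `g` with all other coordinates fixed at their most recent
values). -/
def ExactCoordCycle {K : ℕ} (x0 x1 : Fin K → ℝ) : Prop :=
  ∀ (k : Fin K) (t : ℝ), gT (midpt x0 x1 k (x1 k)) ≤ gT (midpt x0 x1 k t)

noncomputable def EE {K : ℕ} (y : Fin K → ℝ) (n : ℕ) : ℝ :=
  if h : 1 ≤ n ∧ n ≤ K then y ⟨n - 1, by omega⟩ else 0

lemma EE_sum {K : ℕ} (y : Fin K → ℝ) (n : ℕ) :
    ∑ j : Fin K, (if (j : ℕ) + 1 = n then y j else 0) = EE y n := by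
  unfold EE
  split_ifs with h
  · rw [Finset.sum_eq_single (⟨n - 1, by omega⟩ : Fin K)]
    · rw [if_pos]; simp; omega
    · intro b _ hb
      rw [if_neg]
      intro h2
      apply hb
      ext
      simp; omega
    · simp
  · apply Finset.sum_eq_zero
    intro j _
    rw [if_neg]
    have := j.2
    omega

lemma EE_val {K : ℕ} (y : Fin K → ℝ) (j : Fin K) : EE y (j + 1) = y j := by
  unfold EE
  have := j.2
  rw [dif_pos ⟨by omega, by omega⟩]
  rfl

lemma tri_sum {K : ℕ} (y : Fin K → ℝ) (k : Fin K) :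
    ∑ j, triA K k j * y j = EE y k + EE y (k + 1) + EE y (k + 2) := by
  rw [← EE_sum, ← EE_sum, ← EE_sum, ← Finset.sum_add_distrib, ← Finset.sum_add_distrib]
  apply Finset.sum_congr rfl
  intro j _
  simp only [triA, Matrix.of_apply]
  split_ifs <;> first | omega | simp

lemma triA_symm {K : ℕ} (i k : Fin K) : triA K i k = triA K k i := by
  simp only [triA, Matrix.of_apply, and_comm]

lemma mulVec_tri {K : ℕ} (y : Fin K → ℝ) (k : Fin K) :
    (triA K).mulVec y k = EE y k + EE y (k + 1) + EE y (k + 2) := tri_sum y k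

lemma quad_zero (a b c : ℝ) (h : ∀ s : ℝ, a ≤ a + 2 * s * b + s ^ 2 * c) : b = 0 := by
  have h1 := h (-b / (c ^ 2 + 1))
  have h2 : a + 2 * (-b / (c ^ 2 + 1)) * b + (-b / (c ^ 2 + 1)) ^ 2 * c
      = a - b ^ 2 * ((2 * (c ^ 2 + 1) - c) / (c ^ 2 + 1) ^ 2) := by
    field_simp; ring
  rw [h2] at h1
  have h3 : 0 < (2 * (c ^ 2 + 1) - c) / (c ^ 2 + 1) ^ 2 := by
    apply div_pos _ (by positivity)
    nlinarith [sq_nonneg (c - 1)]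
  by_contra hb
  have : 0 < b ^ 2 := by positivity
  have := mul_pos this h3
  linarith

lemma opt_cond_s13 {K : ℕ} (x0 x1 : Fin K → ℝ) (h : ExactCoordCycle x0 x1) (k : Fin K) :
    ∑ i, triA K k i * (triA K).mulVec (midpt x0 x1 k (x1 k)) i = 0 := by
  apply quad_zero (gT (midpt x0 x1 k (x1 k))) _ (∑ i, (triA K k i) ^ 2)
  intro s
  have h1 := h k (x1 k + s)
  have h2 : midpt x0 x1 k (x1 k + s) = midpt x0 x1 k (x1 k) + Pi.single k s := by
    ext j
    simp only [midpt, Pi.add_apply, Pi.single_apply]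
    split_ifs <;> first | omega | simp
  refine h1.trans (le_of_eq ?_)
  rw [h2]
  unfold gT sqnorm
  rw [Matrix.mulVec_add, Finset.mul_sum, Finset.mul_sum, ← Finset.sum_add_distrib,
    ← Finset.sum_add_distrib]
  apply Finset.sum_congr rfl
  intro i _
  have : (triA K).mulVec (Pi.single k s) i = s * triA K k i := by
    rw [triA_symm k i]; simp [mul_comm]
  rw [Pi.add_apply, this]
  ring

lemma EE_mid {K : ℕ} (x0 x1 : Fin K → ℝ) (k : Fin K) (n : ℕ) :
    EE (midpt x0 x1 k (x1 k)) n = if n ≤ k + 1 then EE x1 n else EE x0 n := by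
  unfold EE midpt
  simp only [Fin.lt_def, Fin.ext_iff]
  by_cases h : 1 ≤ n ∧ n ≤ K
  · simp only [dif_pos h]
    by_cases h1 : n - 1 < k
    · rw [if_pos h1, if_pos (by omega)]
    · by_cases h2 : n - 1 = k
      · rw [if_neg h1, if_pos h2, if_pos (by omega)]
        congr 1
        ext
        simp [h2]
      · rw [if_neg h1, if_neg h2, if_neg (by omega)]
  · simp [dif_neg h]

lemma EE_mv {K : ℕ} (y : Fin K → ℝ) (n : ℕ) :
    EE ((triA K).mulVec y) n =
      if 1 ≤ n ∧ n ≤ K then EE y (n - 1) + EE y n + EE y (n + 1) else 0 := by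
  conv_lhs => unfold EE
  split_ifs with h
  · rw [mulVec_tri]
    simp only
    rw [show n - 1 + 1 = n by omega, show n - 1 + 2 = n + 1 by omega]
  · rfl

lemma EE_init (K n : ℕ) : EE (xinit K) n =
    if 1 ≤ n ∧ n ≤ K then (if n = 2 then 1 / 8 else if n = 3 then 3 / 4 else 1) else 0 := by
  unfold EE xinit
  by_cases h : 1 ≤ n ∧ n ≤ K
  · rw [dif_pos h, if_pos h]
    simp only [show (n - 1 = 1) = (n = 2) by simp, show (n - 1 = 2) = (n = 3) by simp]
  · rw [dif_neg h, if_neg h]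

lemma EE_zero {K : ℕ} (y : Fin K → ℝ) : EE y 0 = 0 := by simp [EE]

lemma EE_big {K : ℕ} (y : Fin K → ℝ) (n : ℕ) (h : K < n) : EE y n = 0 := by
  unfold EE; rw [dif_neg (by omega)]

/-- first order condition -/
lemma foc {K : ℕ} (x1 : Fin K → ℝ) (h : ExactCoordCycle (xinit K) x1) (k : ℕ) (hk : k < K) :
    (if 1 ≤ k then EE x1 (k - 1) + EE x1 k + EE x1 (k + 1) else 0)
     + (EE x1 k + EE x1 (k + 1) + EE (xinit K) (k + 2))
     + (if k + 2 ≤ K then EE x1 (k + 1) + EE (xinit K) (k + 2) + EE (xinit K) (k + 3) else 0)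
     = 0 := by
  have := opt_cond_s13 _ _ h ⟨k, hk⟩
  rw [tri_sum] at this
  simp only [EE_mv, EE_mid] at this
  refine Eq.trans ?_ this
  clear this
  congr 1
  · congr 1
    · by_cases hk1 : 1 ≤ k
      · rw [if_pos hk1, if_pos ⟨hk1, hk.le⟩, if_pos (by omega), if_pos (by omega),
          if_pos (by omega)]
      · rw [if_neg hk1, if_neg (by omega)]
    · rw [if_pos (by omega), if_pos (by omega), if_pos (by omega), if_neg (by omega)]
      rfl
  · by_cases hk1 : k + 2 ≤ K
    · rw [if_pos hk1, if_pos (by omega), if_pos (by omega), if_neg (by omega), if_neg (by omega)]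
      rfl
    · rw [if_neg hk1, if_neg (by omega)]

lemma vals {L : ℕ} (x1 : Fin (L + 4) → ℝ) (h : ExactCoordCycle (xinit (L + 4)) x1) :
    ∀ n, n < L + 2 → EE x1 (n + 1) = -1 / 2 := by
  intro n
  induction n using Nat.strong_induction_on with
  | _ n ih =>
    intro hn
    have f := foc x1 h n (by omega)
    rw [if_pos (show n + 2 ≤ L + 4 by omega), EE_init, EE_init,
      if_pos (show 1 ≤ n + 2 ∧ n + 2 ≤ L + 4 by omega),
      if_pos (show 1 ≤ n + 3 ∧ n + 3 ≤ L + 4 by omega)] at f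
    rcases n with _ | _ | m
    · norm_num [EE_zero] at f ⊢
      linarith
    · have := ih 0 (by omega) (by omega)
      norm_num [EE_zero] at f this ⊢
      linarith
    · have a := ih m (by omega) (by omega)
      have b := ih (m + 1) (by omega) (by omega)
      simp only [add_assoc] at *
      norm_num at *
      rw [if_neg (show ¬ m + 4 = 2 by omega), if_neg (show ¬ m + 4 = 3 by omega),
        if_neg (show ¬ m + 5 = 2 by omega), if_neg (show ¬ m + 5 = 3 by omega)] at f
      linarith

lemma main4 {L : ℕ} (x1 : Fin (L + 4) → ℝ) (h : ExactCoordCycle (xinit (L + 4)) x1) :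
    gT x1 = 9 / 4 * L + 179 / 72 := by
  have v := vals x1 h
  have e5 : EE x1 (L + 5) = 0 := EE_big _ _ (by omega)
  have a0 := v L (by omega)
  have a1 : EE x1 (L + 2) = -1 / 2 := v (L + 1) (by omega)
  have f := foc x1 h (L + 2) (by omega)
  have f' := foc x1 h (L + 3) (by omega)
  rw [if_pos (by omega), if_pos (by omega), EE_init, EE_init, if_pos (by omega),
    if_neg (by omega), if_neg (by omega), if_neg (by omega),
    show L + 2 - 1 = L + 1 by omega] at f
  rw [if_pos (by omega), if_neg (by omega), EE_init,
    if_neg (by omega), show L + 3 - 1 = L + 2 by omega] at f'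
  simp only [add_assoc] at f f'
  norm_num at f f'
  have e3 : EE x1 (L + 3) = -1 / 6 := by linarith
  have e4 : EE x1 (L + 4) = 5 / 12 := by linarith
  have : gT x1 = ∑ i ∈ range (L + 4), (EE x1 i + EE x1 (i + 1) + EE x1 (i + 2)) ^ 2 := by
    unfold gT sqnorm
    rw [← Fin.sum_univ_eq_sum_range (fun i => (EE x1 i + EE x1 (i + 1) + EE x1 (i + 2)) ^ 2)]
    simp only [mulVec_tri]
  rw [this, sum_range_succ, sum_range_succ, sum_range_succ, sum_range_succ']
  have s : ∑ i ∈ range L, (EE x1 (i + 1) + EE x1 (i + 1 + 1) + EE x1 (i + 1 + 2)) ^ 2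
      = ∑ i ∈ range L, (9 / 4 : ℝ) := by
    apply Finset.sum_congr rfl
    intro i hi
    have hi := Finset.mem_range.1 hi
    rw [v i (by omega), v (i + 1) (by omega), show i + 1 + 2 = i + 2 + 1 by omega,
      v (i + 2) (by omega)]
    norm_num
  rw [s]
  have v0 := v 0 (by omega)
  have v1 := v 1 (by omega)
  simp only [add_assoc]
  norm_num at v0 v1 ⊢
  rw [EE_zero, v0, v1, a0, a1, e3, e4, e5]
  ring

lemma norm4 (L : ℕ) : sqnorm (xinit (L + 4) - 0) = L + 2 + 37 / 64 := by
  unfold sqnorm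
  rw [sub_zero]
  have : ∑ i, xinit (L + 4) i ^ 2 = ∑ i ∈ range (L + 4),
      ((if i = 1 then 1 / 8 else if i = 2 then 3 / 4 else 1 : ℝ)) ^ 2 := by
    rw [← Fin.sum_univ_eq_sum_range
      (fun i => ((if i = 1 then 1 / 8 else if i = 2 then 3 / 4 else 1 : ℝ)) ^ 2)]
    rfl
  rw [this, sum_range_succ', sum_range_succ', sum_range_succ']
  have s : ∑ i ∈ range (L + 1),
      ((if i + 1 + 1 + 1 = 1 then 1 / 8 else if i + 1 + 1 + 1 = 2 then 3 / 4 else 1 : ℝ)) ^ 2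
      = ∑ i ∈ range (L + 1), (1 : ℝ) := by
    apply Finset.sum_congr rfl
    intro i _
    rw [if_neg (by omega), if_neg (by omega)]
    norm_num
  rw [s]
  norm_num
  ring

/-- tightness result: after one cycle of exact cyclic
coordinate minimization on `g(x) = ‖Ax‖²` from `x^{(0)} = (1,1/8,3/4,1,…,1)`,
the optimality gap satisfies `Δ^{(1)} = g(x^{(1)}) − 0 ≥ (9(K−3)/(4(K−1))) ‖x^{(0)} − x*‖²`
where `x* = 0` is a minimizer of `g` with `g(x*) = 0`. -/
theorem bcd_one_cycle_lower_bound {K : ℕ} (hK : 3 ≤ K)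
    (x1 : Fin K → ℝ) (hcycle : ExactCoordCycle (xinit K) x1) :
    9 * ((K : ℝ) - 3) / (4 * ((K : ℝ) - 1)) * sqnorm (xinit K - 0) ≤ gT x1 - gT (0 : Fin K → ℝ) := by
  have g0 : gT (0 : Fin K → ℝ) = 0 := by simp [gT, sqnorm]
  rw [g0, sub_zero (gT x1)]
  rcases Nat.eq_or_lt_of_le hK with h3 | h4
  · subst h3
    have : 0 ≤ gT x1 := by
      unfold gT sqnorm
      exact Finset.sum_nonneg (fun i _ => sq_nonneg _)
    norm_num
    exact this
  · obtain ⟨L, rfl⟩ : ∃ L, K = L + 4 := ⟨K - 4, by omega⟩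
    rw [main4 x1 hcycle, norm4]
    push_cast
    have hL : (0 : ℝ) ≤ L := Nat.cast_nonneg L
    rw [div_mul_eq_mul_div, div_le_iff₀ (by linarith)]
    nlinarith
end

section
/- Let K ≥ 5 and let x^{(0)} := (1, 1/8, 3/4, 1, 1, …, 1) ∈ ℝ^K. Let x^{(1)} be the point obtained from x^{(0)} by one full cycle of exact cyclic coordinate minimization of g (coordinates updated in the order 1, 2, …, K, each coordinate set to the unique minimizer of g with all other coordinates fixed at their most recent values). Then x_k^{(1)} = −1/2 for k = 1, …, K−2, x_{K−1}^{(1)} = −1/6, and x_K^{(1)} = 5/12. -/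
open Finset

lemma row_sum {K : ℕ} (k : ℕ) (f : ℕ → ℝ) (hf : ∀ n, K ≤ n → f n = 0) :
    ∑ j : Fin K, (if k ≤ (j : ℕ) + 1 ∧ (j : ℕ) ≤ k + 1 then (1 : ℝ) else 0) * f j
      = (if k = 0 then 0 else f (k - 1)) + f k + f (k + 1) := by
  rw [Fin.sum_univ_eq_sum_range
    (fun j => (if k ≤ j + 1 ∧ j ≤ k + 1 then (1 : ℝ) else 0) * f j) K]
  have h : ∀ j ∈ Finset.range K, (if k ≤ j + 1 ∧ j ≤ k + 1 then (1 : ℝ) else 0) * f j =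
      (if j = k - 1 then (if k = 0 then 0 else f j) else 0) + (if j = k then f j else 0)
        + (if j = k + 1 then f j else 0) := by
    intro j _
    split_ifs <;> first | omega | simp
  rw [Finset.sum_congr rfl h, Finset.sum_add_distrib, Finset.sum_add_distrib]
  simp only [Finset.sum_ite_eq', Finset.mem_range]
  have e : ∀ n, (if n < K then f n else 0) = f n := by
    intro n
    split_ifs with h
    · rfl
    · exact (hf n (by omega)).symm
  rw [e, e]
  congr 2
  by_cases hk : k = 0
  · simp [hk]
  · simp only [hk, if_false]
    exact e _

lemma first_order (P C : ℝ) (hC : 0 ≤ C) (h : ∀ s : ℝ, 0 ≤ 2 * s * P + s ^ 2 * C) : P = 0 := by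
  have h1 := h (-P / (C + 1))
  have h2 : 2 * (-P / (C + 1)) * P + (-P / (C + 1)) ^ 2 * C = -(P ^ 2 * (C + 2)) / (C + 1) ^ 2 := by
    field_simp
    ring
  rw [h2] at h1
  by_contra hP
  have : 0 < P ^ 2 * (C + 2) / (C + 1) ^ 2 := by positivity
  rw [neg_div] at h1
  linarith

lemma opt_eq {K : ℕ} (x0 x1 : Fin K → ℝ) (h : ExactCoordCycle x0 x1) (k : Fin K) :
    ∑ i, triA K i k * (triA K).mulVec (midpt x0 x1 k (x1 k)) i = 0 := by
  apply first_order _ (∑ i, triA K i k ^ 2) (Finset.sum_nonneg fun i _ => sq_nonneg _)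
  intro s
  have h1 := h k (x1 k + s)
  have h2 : midpt x0 x1 k (x1 k + s) = midpt x0 x1 k (x1 k) + Pi.single k s := by
    funext j
    by_cases hj : j = k
    · subst hj
      simp [midpt]
    · simp [midpt, hj]
  rw [h2] at h1
  unfold gT sqnorm at h1
  rw [Matrix.mulVec_add] at h1
  have h3 : ∀ i, (triA K).mulVec (Pi.single k s) i = triA K i k * s := by
    intro i
    simp
  simp only [Pi.add_apply, h3, add_sq, Finset.sum_add_distrib] at h1
  rw [Finset.mul_sum, Finset.mul_sum, ← Finset.sum_add_distrib]
  rw [add_assoc, ← Finset.sum_add_distrib] at h1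
  have h4 := (le_add_iff_nonneg_right _).1 h1
  refine h4.trans_eq (Finset.sum_congr rfl fun i _ => by ring)

/-- extension by zero -/
noncomputable def ext0 {K : ℕ} (y : Fin K → ℝ) (n : ℕ) : ℝ := if h : n < K then y ⟨n, h⟩ else 0

lemma mulVec_eq {K : ℕ} (y : Fin K → ℝ) (i : Fin K) :
    (triA K).mulVec y i = (if (i : ℕ) = 0 then 0 else ext0 y (i - 1)) + ext0 y i
      + ext0 y (i + 1) := by
  rw [← row_sum (K := K) (i : ℕ) (ext0 y) (fun n hn => by simp [ext0, hn])]
  simp [Matrix.mulVec, dotProduct, triA, ext0]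

lemma opt_eq' {K : ℕ} (y : Fin K → ℝ) (k : Fin K)
    (h : ∑ i, triA K i k * (triA K).mulVec y i = 0) :
    (if (k : ℕ) = 0 then 0 else ext0 ((triA K).mulVec y) (k - 1)) + ext0 ((triA K).mulVec y) k
      + ext0 ((triA K).mulVec y) (k + 1) = 0 := by
  rw [← mulVec_eq, ← h]
  simp only [Matrix.mulVec, dotProduct]
  refine Finset.sum_congr rfl fun i _ => ?_
  congr 1
  simp only [triA, Matrix.of_apply, and_comm]

/-- explicit computation of one cycle of exact cyclic
coordinate minimization on `g(x) = ‖Ax‖²` from `x^{(0)} = (1,1/8,3/4,1,…,1)`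
for `K ≥ 5`: the result is `x^{(1)} = (−1/2, …, −1/2, −1/6, 5/12)`. -/
theorem bcd_one_cycle_explicit {K : ℕ} (hK : 5 ≤ K)
    (x1 : Fin K → ℝ) (hcycle : ExactCoordCycle (xinit K) x1) :
    (∀ k : Fin K, (k : ℕ) < K - 2 → x1 k = -(1 / 2)) ∧
    (∀ k : Fin K, (k : ℕ) = K - 2 → x1 k = -(1 / 6)) ∧
    (∀ k : Fin K, (k : ℕ) = K - 1 → x1 k = 5 / 12) := by
  have key : ∀ n (hn : n < K), x1 ⟨n, hn⟩ =
      if n < K - 2 then -(1 / 2) else if n = K - 2 then -(1 / 6) else 5 / 12 := by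
    intro n
    induction n using Nat.strong_induction_on with
    | _ n ih =>
    intro hn
    have h := opt_eq' _ _ (opt_eq _ _ hcycle ⟨n, hn⟩)
    have hlt : ∀ m, m < n →
        ext0 (midpt (xinit K) x1 ⟨n, hn⟩ (x1 ⟨n, hn⟩)) m =
          if m < K - 2 then -(1 / 2) else if m = K - 2 then -(1 / 6) else 5 / 12 := by
      intro m hm
      have hm' : m < K := by omega
      rw [← ih m hm hm']
      simp [ext0, midpt, hm, hm']
    have heq : ext0 (midpt (xinit K) x1 ⟨n, hn⟩ (x1 ⟨n, hn⟩)) n = x1 ⟨n, hn⟩ := by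
      simp [ext0, midpt, hn]
    have hgt : ∀ m, n < m →
        ext0 (midpt (xinit K) x1 ⟨n, hn⟩ (x1 ⟨n, hn⟩)) m =
          if m < K then (if m = 1 then 1 / 8 else if m = 2 then 3 / 4 else 1) else 0 := by
      intro m hm
      by_cases hm' : m < K
      · simp [ext0, midpt, hm', xinit, hm.not_gt, hm.ne']
      · simp [ext0, hm']
    have hA : ∀ m, ext0 ((triA K).mulVec (midpt (xinit K) x1 ⟨n, hn⟩ (x1 ⟨n, hn⟩))) m =
        if m < K then (if m = 0 then 0 else
          ext0 (midpt (xinit K) x1 ⟨n, hn⟩ (x1 ⟨n, hn⟩)) (m - 1)) +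
          ext0 (midpt (xinit K) x1 ⟨n, hn⟩ (x1 ⟨n, hn⟩)) m +
          ext0 (midpt (xinit K) x1 ⟨n, hn⟩ (x1 ⟨n, hn⟩)) (m + 1) else 0 := by
      intro m
      by_cases hm' : m < K
      · rw [if_pos hm', ← mulVec_eq _ ⟨m, hm'⟩]
        simp [ext0, hm']
      · simp [ext0, hm']
    simp only [hA] at h
    generalize ext0 (midpt (xinit K) x1 ⟨n, hn⟩ (x1 ⟨n, hn⟩)) = Y at *
    rw [← heq]
    clear hA heq ih hcycle
    have hgt1 := hgt (n + 1) (by omega)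
    have hgt2 := hgt (n + 2) (by omega)
    match n, hn, h, hlt, hgt1, hgt2 with
    | 0, hn, h, hlt, hgt1, hgt2 =>
      have a1 : 1 < K := by omega
      have a2 : 2 < K := by omega
      have a3 : 0 < K := by omega
      simp [a1, a2, a3] at h hgt1 hgt2 ⊢
      linarith
    | 1, hn, h, hlt, hgt1, hgt2 =>
      have a1 : 1 < K := by omega
      have a2 : 2 < K := by omega
      have a3 : 0 < K := by omega
      have a4 : 3 < K := by omega
      have a5 : 1 < K - 2 := by omega
      have a6 : 0 < K - 2 := by omega
      have l0 := hlt 0 (by omega)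
      rw [if_pos a6] at l0
      simp [a1, a2, a3, a4, a5] at h hgt1 hgt2 ⊢
      linarith
    | n + 2, hn, h, hlt, hgt1, hgt2 =>
      have l0 := hlt n (by omega)
      have l1 := hlt (n + 1) (by omega)
      have a1 : n + 1 < K := by omega
      have a2 : n < K - 2 := by omega
      simp only [Nat.add_sub_cancel, show n + 2 - 1 = n + 1 by omega, a1, a2, hn, if_true,
        show n + 1 ≠ 0 by omega, show n + 2 ≠ 0 by omega, show n + 2 + 1 ≠ 0 by omega,
        show n + 2 + 1 - 1 = n + 2 by omega, show n + 1 + 1 = n + 2 by omega,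
        show n + 2 + 1 ≠ 1 by omega, show n + 2 + 1 ≠ 2 by omega, show n + 2 + 2 ≠ 1 by omega,
        show n + 2 + 2 ≠ 2 by omega, show n + 2 + 1 + 1 = n + 2 + 2 by omega,
        if_false] at h l0 l1 hgt1 hgt2
      by_cases b1 : n + 2 + 2 < K
      · have b2 : n + 2 + 1 < K := by omega
        have b3 : n + 2 < K - 2 := by omega
        have b4 : n + 1 < K - 2 := by omega
        simp only [b1, b2, b3, b4, if_true] at h l1 hgt1 hgt2 ⊢
        linarith
      · by_cases b2 : n + 2 + 1 < K
        · have b3 : ¬ n + 2 < K - 2 := by omega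
          have b4 : n + 1 < K - 2 := by omega
          have b5 : n + 2 = K - 2 := by omega
          rw [if_neg b3, if_pos b5]
          simp only [b1, b2, b4, if_true, if_false] at h l1 hgt1 hgt2
          linarith
        · have b3 : ¬ n + 2 < K - 2 := by omega
          have b4 : ¬ n + 1 < K - 2 := by omega
          have b5 : ¬ n + 2 = K - 2 := by omega
          have b6 : n + 1 = K - 2 := by omega
          rw [if_neg b3, if_neg b5]
          rw [if_neg b4, if_pos b6] at l1
          simp only [b1, b2, if_false] at h hgt1 hgt2
          linarith
  refine ⟨fun k hk => ?_, fun k hk => ?_, fun k hk => ?_⟩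
  · rw [key k k.2, if_pos hk]
  · rw [key k k.2, if_neg (by omega), if_pos hk]
  · rw [key k k.2, if_neg (by omega), if_neg (by omega)]
end
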